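/- Let G be a connected twin graph on an odd number n of vertices, with the t = (n−1)/2 pairwise disjoint twin pairs C_1,…,C_t and the remaining (non-twin) vertex v_n, and let π* = {C_1,…,C_t,{v_n}} be the twin partition of G. If the quotient Laplacian L_{π*} admits a non-trivial almost equitable partition of the quotient graph of the form ρ = {S_1,…,S_m, {{v_n}}}, where {S_1,…,S_m} is a partition of {C_1,…,C_t} with m < t, then G is strongly uncontrollable, i.e., (L(G), b) is uncontrollable for every b ∈ {0,1}^n. -/

import Mathlib

open Classical Matrix

noncomputable def lap {n : ℕ} (G : SimpleGraph (Fin n)) : Matrix (Fin n) (Fin n) ℝ :=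
  Matrix.of fun i j =>
    (if i = j then ((G.neighborSet i).ncard : ℝ) else 0) - (if G.Adj i j then 1 else 0)

def IsTwin {n : ℕ} (G : SimpleGraph (Fin n)) (u v : Fin n) : Prop :=
  u ≠ v ∧ G.neighborSet u \ {v} = G.neighborSet v \ {u}

def IsEigenvalue {n : ℕ} (M : Matrix (Fin n) (Fin n) ℝ) (μ : ℝ) : Prop :=
  ∃ x : Fin n → ℝ, x ≠ 0 ∧ M.mulVec x = μ • x

def HasSimpleSpectrum {n : ℕ} (M : Matrix (Fin n) (Fin n) ℝ) : Prop :=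
  ∃ μ : Fin n → ℝ, Function.Injective μ ∧ ∀ i, IsEigenvalue M (μ i)

def Controllable {n : ℕ} (M : Matrix (Fin n) (Fin n) ℝ) (b : Fin n → ℝ) : Prop :=
  Submodule.span ℝ (Set.range fun k : Fin n => (M ^ (k : ℕ)).mulVec b) = ⊤

def StronglyUncontrollable {n : ℕ} (G : SimpleGraph (Fin n)) : Prop :=
  G.Connected ∧ HasSimpleSpectrum (lap G) ∧
    ∀ b : Fin n → ℝ, (∀ i, b i = 0 ∨ b i = 1) → ¬ Controllable (lap G) b

def Pmat {n k : ℕ} (c : Fin n → Fin k) : Matrix (Fin n) (Fin k) ℝ :=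
  Matrix.of fun i j => if c i = j then 1 else 0

def IsAEP {n k : ℕ} (G : SimpleGraph (Fin n)) (c : Fin n → Fin k) : Prop :=
  ∀ i j : Fin k, i ≠ j → ∀ x y : Fin n, c x = i → c y = i →
    (G.neighborSet x ∩ {z | c z = j}).ncard = (G.neighborSet y ∩ {z | c z = j}).ncard

noncomputable def quotLap {n k : ℕ} (G : SimpleGraph (Fin n)) (c : Fin n → Fin k) :
    Matrix (Fin k) (Fin k) ℝ :=
  ((Pmat c)ᵀ * Pmat c)⁻¹ * (Pmat c)ᵀ * lap G * Pmat c

def IsQuotAEP {k m : ℕ} (Lq : Matrix (Fin k) (Fin k) ℝ) (r : Fin k → Fin m) : Prop :=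
  ∀ a b : Fin m, a ≠ b → ∀ C C' : Fin k, r C = a → r C' = a →
    ∑ C'' ∈ Finset.univ.filter (fun C'' => r C'' = b), Lq C C'' =
      ∑ C'' ∈ Finset.univ.filter (fun C'' => r C'' = b), Lq C' C''

def IsGraphAut {n : ℕ} (G : SimpleGraph (Fin n)) (σ : Equiv.Perm (Fin n)) : Prop :=
  ∀ x y, G.Adj x y ↔ G.Adj (σ x) (σ y)

def joinOne {n : ℕ} (G : SimpleGraph (Fin n)) : SimpleGraph (Fin (n + 1)) where
  Adj x y := x ≠ y ∧ ((x : ℕ) = n ∨ (y : ℕ) = n ∨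
    ∃ (hx : (x : ℕ) < n) (hy : (y : ℕ) < n), G.Adj ⟨x, hx⟩ ⟨y, hy⟩)
  symm := by
    constructor
    rintro x y ⟨hxy, h⟩
    refine ⟨hxy.symm, ?_⟩
    rcases h with h | h | ⟨hx, hy, h⟩
    exacts [Or.inr (Or.inl h), Or.inl h, Or.inr (Or.inr ⟨hy, hx, h.symm⟩)]
  loopless := ⟨fun x h => h.1 rfl⟩

def joinTwo {n : ℕ} (G : SimpleGraph (Fin n)) : SimpleGraph (Fin (n + 2)) where
  Adj x y := x ≠ y ∧ (((x : ℕ) < n ∧ n ≤ (y : ℕ)) ∨ ((y : ℕ) < n ∧ n ≤ (x : ℕ)) ∨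
    ∃ (hx : (x : ℕ) < n) (hy : (y : ℕ) < n), G.Adj ⟨x, hx⟩ ⟨y, hy⟩)
  symm := by
    constructor
    rintro x y ⟨hxy, h⟩
    refine ⟨hxy.symm, ?_⟩
    rcases h with h | h | ⟨hx, hy, h⟩
    exacts [Or.inr (Or.inl h), Or.inl h, Or.inr (Or.inr ⟨hy, hx, h.symm⟩)]
  loopless := ⟨fun x h => h.1 rfl⟩

def addPendant {n : ℕ} (G : SimpleGraph (Fin n)) (v : Fin n) : SimpleGraph (Fin (n + 1)) where
  Adj x y := ((x : ℕ) = n ∧ (y : ℕ) = (v : ℕ)) ∨ ((y : ℕ) = n ∧ (x : ℕ) = (v : ℕ)) ∨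
    ∃ (hx : (x : ℕ) < n) (hy : (y : ℕ) < n), G.Adj ⟨x, hx⟩ ⟨y, hy⟩
  symm := by
    constructor
    rintro x y (h | h | ⟨hx, hy, h⟩)
    exacts [Or.inr (Or.inl h), Or.inl h, Or.inr (Or.inr ⟨hy, hx, h.symm⟩)]
  loopless := by
    constructor
    intro x h
    have hv := v.isLt
    rcases h with ⟨h1, h2⟩ | ⟨h1, h2⟩ | ⟨hx, hy, h⟩
    · omega
    · omega
    · exact G.loopless.irrefl _ h

/-! If `b` takes equal values on some twin pair, it is fixed by the automorphism swapping that pair,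
and the vectors fixed by a nontrivial automorphism form a proper `L`-invariant subspace.

Otherwise a binary `b` has average `1/2` on every twin pair. For an almost equitable partition `π`,
the symmetric matrix `L` preserves the cellwise constant vectors, so it commutes with the orthogonal
projection onto them; that is, taking cell averages intertwines `L` with `L_π`. Hence the vectors
whose cell averages are constant on the cells of `ρ` form an `L`-invariant subspace. It contains
`b`, and it is proper because `ρ` merges at least two cells of `π`. -/

theorem not_controllable_of_mem_invariant {n : ℕ} {M : Matrix (Fin n) (Fin n) ℝ} {b : Fin n → ℝ}
    {V : Submodule ℝ (Fin n → ℝ)} (hV : V ≠ ⊤) (hM : ∀ y ∈ V, M *ᵥ y ∈ V) (hb : b ∈ V) :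
    ¬ Controllable M b := by
  have pow_mulVec_mem (k : ℕ) : (M ^ k) *ᵥ b ∈ V := by
    induction k with
    | zero => simpa using hb
    | succ k ih =>
      rw [pow_succ', ← mulVec_mulVec]
      exact hM _ ih
  intro h
  refine hV (eq_top_iff.2 (h.ge.trans (Submodule.span_le.2 ?_)))
  rintro _ ⟨k, rfl⟩
  exact pow_mulVec_mem k

section Laplacian

variable {n : ℕ}

theorem lap_eq_lapMatrix (G : SimpleGraph (Fin n)) : lap G = G.lapMatrix ℝ := by
  ext i j
  simp [lap, SimpleGraph.lapMatrix, SimpleGraph.degMatrix, diagonal_apply,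
    SimpleGraph.adjMatrix_apply, Set.ncard_eq_toFinset_card',
    ← SimpleGraph.card_neighborSet_eq_degree]

theorem lap_isSymm (G : SimpleGraph (Fin n)) : (lap G).IsSymm :=
  lap_eq_lapMatrix G ▸ G.isSymm_lapMatrix ℝ

theorem lap_mulVec_one (G : SimpleGraph (Fin n)) : lap G *ᵥ 1 = 0 := by
  rw [lap_eq_lapMatrix]
  exact G.lapMatrix_mulVec_const_eq_zero

end Laplacian

section Automorphism

variable {n : ℕ} {G : SimpleGraph (Fin n)} {σ : Equiv.Perm (Fin n)}

theorem IsGraphAut.lap_submatrix (hσ : IsGraphAut G σ) : (lap G).submatrix σ σ = lap G := by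
  ext i j
  have neighborSet_eq : G.neighborSet (σ i) = σ '' G.neighborSet i := by
    ext z
    simp [Equiv.image_eq_preimage_symm, hσ i]
  simp [lap, neighborSet_eq, Set.ncard_image_of_injective _ σ.injective, ← hσ i j]

theorem IsGraphAut.lap_mulVec_comp (hσ : IsGraphAut G σ) (y : Fin n → ℝ) :
    (lap G *ᵥ y) ∘ σ = lap G *ᵥ (y ∘ σ) := by
  simpa [hσ.lap_submatrix, Function.comp_assoc] using
    (submatrix_mulVec_equiv (lap G) (y ∘ σ) σ σ).symm

theorem IsGraphAut.not_controllable (hσ : IsGraphAut G σ) (hσ_ne : σ ≠ 1) {b : Fin n → ℝ}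
    (hb : b ∘ σ = b) : ¬ Controllable (lap G) b := by
  refine not_controllable_of_mem_invariant
    (V := LinearMap.eqLocus (LinearMap.funLeft ℝ ℝ σ) LinearMap.id) (fun htop => ?_)
    (fun y hy => (hσ.lap_mulVec_comp y).trans (congrArg (lap G *ᵥ ·) hy)) hb
  obtain ⟨x, hx⟩ : ∃ x, σ x ≠ x := by
    contrapose! hσ_ne
    exact Equiv.ext hσ_ne
  have single_comp : (Pi.single x 1 : Fin n → ℝ) ∘ σ = Pi.single x 1 :=
    htop.ge (Submodule.mem_top (x := (Pi.single x 1 : Fin n → ℝ)))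
  simpa [hx] using congrFun single_comp x

end Automorphism

section Twin

variable {n : ℕ} {G : SimpleGraph (Fin n)} {u v : Fin n}

theorem IsTwin.symm (h : IsTwin G u v) : IsTwin G v u :=
  ⟨h.1.symm, h.2.symm⟩

theorem IsTwin.adj_iff (h : IsTwin G u v) {z : Fin n} (hu : z ≠ u) (hv : z ≠ v) :
    G.Adj u z ↔ G.Adj v z := by
  simpa [hu, hv] using Set.ext_iff.1 h.2 z

theorem IsTwin.isGraphAut_swap (h : IsTwin G u v) : IsGraphAut G (Equiv.swap u v) := by
  have adj_iff (z : Fin n) (hu : z ≠ u) (hv : z ≠ v) : G.Adj u z ↔ G.Adj v z := h.adj_iff hu hv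
  intro x y
  simp only [Equiv.swap_apply_def]
  grind [G.adj_comm, G.irrefl]

theorem IsTwin.not_controllable (h : IsTwin G u v) {b : Fin n → ℝ} (hb : b u = b v) :
    ¬ Controllable (lap G) b := by
  refine h.isGraphAut_swap.not_controllable (mt Equiv.swap_eq_one_iff.1 h.1) (funext fun x => ?_)
  simp only [Function.comp_apply, Equiv.swap_apply_def]
  grind

theorem isAEP_of_isTwin {k : ℕ} {c : Fin n → Fin k}
    (h : ∀ x y, c x = c y → x = y ∨ IsTwin G x y) : IsAEP G c := by
  rintro i j hij x y rfl hy
  obtain rfl | hxy := h x y hy.symm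
  · rfl
  congr 1
  ext z
  refine and_congr_left fun (hz : c z = j) => hxy.adj_iff ?_ ?_ <;> grind

end Twin

section Partition

variable {n k : ℕ} {c : Fin n → Fin k}

theorem mul_Pmat_apply {l : ℕ} (M : Matrix (Fin l) (Fin n) ℝ) (c : Fin n → Fin k) (x : Fin l)
    (j : Fin k) : (M * Pmat c) x j = ∑ z with c z = j, M x z := by
  simp [mul_apply, Pmat, Finset.sum_filter]

theorem Pmat_mulVec (c : Fin n → Fin k) (z : Fin k → ℝ) : Pmat c *ᵥ z = z ∘ c := by
  ext x
  simp [Pmat, mulVec, dotProduct]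

theorem transpose_Pmat_mulVec_apply (c : Fin n → Fin k) (y : Fin n → ℝ) (j : Fin k) :
    ((Pmat c)ᵀ *ᵥ y) j = ∑ x with c x = j, y x := by
  simp [Pmat, mulVec, dotProduct, Finset.sum_filter]

theorem transpose_Pmat_mul_Pmat (c : Fin n → Fin k) :
    (Pmat c)ᵀ * Pmat c = diagonal fun j => ((Finset.univ.filter (c · = j)).card : ℝ) := by
  ext i j
  rw [mul_apply, diagonal_apply]
  simp only [Pmat, transpose_apply, of_apply]
  split_ifs with hij
  · simp [hij, ← ite_and]
  · refine Finset.sum_eq_zero fun x _ => ?_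
    grind

theorem isUnit_det_transpose_Pmat_mul_Pmat (hc : c.Surjective) :
    IsUnit ((Pmat c)ᵀ * Pmat c).det := by
  rw [transpose_Pmat_mul_Pmat, det_diagonal, isUnit_iff_ne_zero, Finset.prod_ne_zero_iff]
  intro j _
  obtain ⟨x, hx⟩ := hc j
  exact Nat.cast_ne_zero.2 (Finset.card_ne_zero_of_mem (a := x) (by simpa using hx))

/-- The matrix taking a vector to its averages over the cells of the partition `c`. It is written
as the pseudo-inverse of `Pmat c` so that `quotLap G c` is `cellAverage c * lap G * Pmat c` by
definition; it is meaningful only if no cell is empty. -/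
noncomputable def cellAverage (c : Fin n → Fin k) : Matrix (Fin k) (Fin n) ℝ :=
  ((Pmat c)ᵀ * Pmat c)⁻¹ * (Pmat c)ᵀ

theorem cellAverage_mul_Pmat (hc : c.Surjective) : cellAverage c * Pmat c = 1 := by
  rw [cellAverage, Matrix.mul_assoc, nonsing_inv_mul _ (isUnit_det_transpose_Pmat_mul_Pmat hc)]

theorem cellAverage_mulVec_surjective (hc : c.Surjective) :
    Function.Surjective (cellAverage c).mulVecLin := fun z =>
  ⟨Pmat c *ᵥ z, by simp [cellAverage_mul_Pmat hc]⟩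

theorem cellAverage_mulVec_apply (hc : c.Surjective) (y : Fin n → ℝ) (j : Fin k) :
    (cellAverage c *ᵥ y) j = (∑ x with c x = j, y x) / (Finset.univ.filter (c · = j)).card := by
  have hunit := isUnit_det_transpose_Pmat_mul_Pmat hc
  have hmul : ((Pmat c)ᵀ * Pmat c) *ᵥ (cellAverage c *ᵥ y) = (Pmat c)ᵀ *ᵥ y := by
    rw [cellAverage, mulVec_mulVec, ← Matrix.mul_assoc, mul_nonsing_inv _ hunit, Matrix.one_mul]
  rw [transpose_Pmat_mul_Pmat] at hmul
  have hj := congrFun hmul j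
  rw [mulVec_diagonal, transpose_Pmat_mulVec_apply] at hj
  obtain ⟨x, hx⟩ := hc j
  rw [eq_div_iff (Nat.cast_ne_zero.2 (Finset.card_ne_zero_of_mem (a := x) (by simpa using hx))),
    mul_comm, hj]

theorem cellAverage_mulVec_apply_of_pair (hc : c.Surjective) {j : Fin k} {u v : Fin n} (huv : u ≠ v)
    (hj : ∀ x, c x = j ↔ x = u ∨ x = v) (y : Fin n → ℝ) :
    (cellAverage c *ᵥ y) j = (y u + y v) / 2 := by
  have cell_eq : Finset.univ.filter (c · = j) = {u, v} := by
    ext x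
    simp [hj]
  rw [cellAverage_mulVec_apply hc, cell_eq, Finset.sum_pair huv, Finset.card_pair huv, Nat.cast_two]

theorem Pmat_mul_cellAverage_isSymm (c : Fin n → Fin k) : (Pmat c * cellAverage c).IsSymm := by
  simp [IsSymm, cellAverage, transpose_nonsing_inv, Matrix.mul_assoc]

theorem Pmat_mul_cellAverage_mul {l : ℕ} (hc : c.Surjective) {X : Matrix (Fin n) (Fin l) ℝ}
    (hX : Function.FactorsThrough X c) : Pmat c * (cellAverage c * X) = X := by
  obtain ⟨F, rfl⟩ : ∃ F : Matrix (Fin k) (Fin l) ℝ, X = Pmat c * F := by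
    refine ⟨X.submatrix (Function.surjInv hc) id, ?_⟩
    ext x j
    have hx : X x = X (Function.surjInv hc (c x)) := hX (Function.surjInv_eq hc (c x)).symm
    simp [mul_apply, Pmat, hx]
  rw [← Matrix.mul_assoc (cellAverage c), cellAverage_mul_Pmat hc, Matrix.one_mul]

end Partition

section AlmostEquitable

variable {n k m : ℕ} {G : SimpleGraph (Fin n)} {c : Fin n → Fin k}

theorem sum_lap_eq_neg_ncard (G : SimpleGraph (Fin n)) {x : Fin n} {j : Fin k} (hx : c x ≠ j) :
    ∑ z with c z = j, lap G x z = -((G.neighborSet x ∩ {z | c z = j}).ncard : ℝ) := by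
  have lap_apply : ∀ z ∈ Finset.univ.filter (c · = j),
      lap G x z = -(if G.Adj x z then 1 else 0) := by
    intro z hz
    have hxz : x ≠ z := by grind
    simp [lap, hxz]
  rw [Finset.sum_congr rfl lap_apply, Finset.sum_neg_distrib, Finset.sum_boole,
    Finset.filter_filter, Set.ncard_eq_toFinset_card']
  congr 3
  ext z
  simp [and_comm]

theorem IsAEP.isQuotAEP_lap (h : IsAEP G c) : IsQuotAEP (lap G) c := by
  intro i j hij x y hx hy
  rw [sum_lap_eq_neg_ncard G (hx ▸ hij), sum_lap_eq_neg_ncard G (hy ▸ hij), h i j hij x y hx hy]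

theorem IsQuotAEP.factorsThrough_mul_Pmat {M : Matrix (Fin n) (Fin n) ℝ} (h : IsQuotAEP M c)
    (hM : M *ᵥ 1 = 0) : Function.FactorsThrough (M * Pmat c) c := by
  intro x y hxy
  have of_ne (j : Fin k) (hj : j ≠ c x) : (M * Pmat c) x j = (M * Pmat c) y j := by
    simpa only [mul_Pmat_apply] using h (c x) j hj.symm x y rfl hxy.symm
  have row_sum (z : Fin n) : ∑ j, (M * Pmat c) z j = 0 := by
    have hone : (M * Pmat c) *ᵥ 1 = 0 := by rw [← mulVec_mulVec, Pmat_mulVec]; exact hM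
    simpa [mulVec, dotProduct] using congrFun hone z
  ext j
  obtain rfl | hj := eq_or_ne j (c x)
  · -- `IsQuotAEP` leaves out the block of a cell with itself: it is minus the sum of the others.
    have hsum := (row_sum x).trans (row_sum y).symm
    rwa [← Finset.add_sum_erase _ _ (Finset.mem_univ (c x)),
      ← Finset.add_sum_erase _ _ (Finset.mem_univ (c x)),
      Finset.sum_congr rfl fun j hj => of_ne j (Finset.ne_of_mem_erase hj),
      add_left_inj] at hsum
  · exact of_ne j hj

theorem IsQuotAEP.factorsThrough_mulVec {M : Matrix (Fin n) (Fin n) ℝ} (h : IsQuotAEP M c)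
    (hM : M *ᵥ 1 = 0) {z : Fin n → ℝ} (hz : z.FactorsThrough c) : (M *ᵥ z).FactorsThrough c := by
  obtain ⟨g, rfl⟩ := (Function.factorsThrough_iff z).1 hz
  intro x y hxy
  rw [← Pmat_mulVec, mulVec_mulVec]
  exact congrArg (· ⬝ᵥ g) (h.factorsThrough_mul_Pmat hM hxy)

theorem quotLap_eq (G : SimpleGraph (Fin n)) (c : Fin n → Fin k) :
    quotLap G c = cellAverage c * lap G * Pmat c :=
  rfl

theorem quotLap_mulVec_one (G : SimpleGraph (Fin n)) (c : Fin n → Fin k) :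
    quotLap G c *ᵥ 1 = 0 := by
  have Pmat_mulVec_one : Pmat c *ᵥ 1 = 1 := Pmat_mulVec c 1
  rw [quotLap, ← mulVec_mulVec, Pmat_mulVec_one, ← mulVec_mulVec, lap_mulVec_one, mulVec_zero]

theorem IsAEP.lap_mul_Pmat (h : IsAEP G c) (hc : c.Surjective) :
    lap G * Pmat c = Pmat c * quotLap G c := by
  have hfactors := h.isQuotAEP_lap.factorsThrough_mul_Pmat (lap_mulVec_one G)
  rw [quotLap_eq, Matrix.mul_assoc, Pmat_mul_cellAverage_mul hc hfactors]

theorem IsAEP.Pmat_mul_cellAverage_mul_lap (h : IsAEP G c) (hc : c.Surjective) :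
    Pmat c * cellAverage c * lap G = lap G * (Pmat c * cellAverage c) := by
  set E := Pmat c * cellAverage c with hE
  have transpose_E : Eᵀ = E := Pmat_mul_cellAverage_isSymm c
  have transpose_lap : (lap G)ᵀ = lap G := lap_isSymm G
  have lap_mul_E : lap G * E = E * lap G * E := by
    rw [hE, ← Matrix.mul_assoc, h.lap_mul_Pmat hc, quotLap_eq]
    simp only [Matrix.mul_assoc]
  calc E * lap G = (lap G * E)ᵀ := by rw [transpose_mul, transpose_E, transpose_lap]
    _ = (E * lap G * E)ᵀ := by rw [lap_mul_E]
    _ = E * lap G * E := by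
      simp only [transpose_mul, transpose_E, transpose_lap, Matrix.mul_assoc]
    _ = lap G * E := lap_mul_E.symm

theorem IsAEP.cellAverage_mul_lap (h : IsAEP G c) (hc : c.Surjective) :
    cellAverage c * lap G = quotLap G c * cellAverage c :=
  calc cellAverage c * lap G
    _ = cellAverage c * Pmat c * (cellAverage c * lap G) := by
      rw [cellAverage_mul_Pmat hc, Matrix.one_mul]
    _ = cellAverage c * (Pmat c * cellAverage c * lap G) := by simp only [Matrix.mul_assoc]
    _ = quotLap G c * cellAverage c := by
      rw [h.Pmat_mul_cellAverage_mul_lap hc, quotLap_eq]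
      simp only [Matrix.mul_assoc]

/-- The vectors that are constant on the cells of the partition `r`. -/
def cellConstant (r : Fin k → Fin m) : Submodule ℝ (Fin k → ℝ) where
  carrier := {z | z.FactorsThrough r}
  add_mem' hy hz _ _ h := congrArg₂ (· + ·) (hy h) (hz h)
  zero_mem' _ _ _ := rfl
  smul_mem' s _ hz _ _ h := congrArg (s • ·) (hz h)

theorem cellConstant_ne_top {r : Fin k → Fin m} (hr : ¬ r.Injective) : cellConstant r ≠ ⊤ := by
  intro htop
  refine hr fun i j hij => ?_
  have hsingle : (Pi.single i 1 : Fin k → ℝ) ∈ cellConstant r := htop ▸ Submodule.mem_top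
  by_contra hne
  simpa [Pi.single_apply, Ne.symm hne] using hsingle hij

theorem IsAEP.not_controllable (h : IsAEP G c) (hc : c.Surjective) {r : Fin k → Fin m}
    (hr : ¬ r.Injective) (hρ : IsQuotAEP (quotLap G c) r) {b : Fin n → ℝ}
    (hb : (cellAverage c *ᵥ b).FactorsThrough r) : ¬ Controllable (lap G) b := by
  refine not_controllable_of_mem_invariant
    (V := (cellConstant r).comap (cellAverage c).mulVecLin) (fun htop => ?_) (fun y hy => ?_) hb
  · refine cellConstant_ne_top hr ?_
    rwa [← Submodule.comap_top (cellAverage c).mulVecLin,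
      (Submodule.comap_injective_of_surjective (cellAverage_mulVec_surjective hc)).eq_iff] at htop
  · have average_lap : cellAverage c *ᵥ (lap G *ᵥ y) = quotLap G c *ᵥ (cellAverage c *ᵥ y) := by
      rw [mulVec_mulVec, h.cellAverage_mul_lap hc, mulVec_mulVec]
    change (cellAverage c *ᵥ (lap G *ᵥ y)).FactorsThrough r
    rw [average_lap]
    exact hρ.factorsThrough_mulVec (quotLap_mulVec_one G c) hy

end AlmostEquitable

/-- `c` labels the cells of the twin partition of `G` with twin pairs `{u i, v i}` and one remaining
vertex `a`: the cell of `a` is labelled by `Fin.last t`, the `i`-th pair by `i.castSucc`. -/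
structure IsTwinPartition {t n : ℕ} (G : SimpleGraph (Fin n)) (u v : Fin t → Fin n) (a : Fin n)
    (c : Fin n → Fin (t + 1)) : Prop where
  isTwin : ∀ i, IsTwin G (u i) (v i)
  eq_castSucc_iff : ∀ i x, c x = i.castSucc ↔ x = u i ∨ x = v i
  eq_last_iff : ∀ x, c x = Fin.last t ↔ x = a

namespace IsTwinPartition

variable {t n m : ℕ} {G : SimpleGraph (Fin n)} {u v : Fin t → Fin n} {a : Fin n}
  {c : Fin n → Fin (t + 1)}

theorem surjective (h : IsTwinPartition G u v a c) : c.Surjective :=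
  Fin.lastCases ⟨a, (h.eq_last_iff a).2 rfl⟩ fun i => ⟨u i, (h.eq_castSucc_iff i _).2 (.inl rfl)⟩

theorem isAEP (h : IsTwinPartition G u v a c) : IsAEP G c := by
  refine isAEP_of_isTwin fun x y hxy => ?_
  obtain ⟨i, hx⟩ | hx := (c x).eq_castSucc_or_eq_last <;> have hy := hxy ▸ hx
  · obtain rfl | rfl := (h.eq_castSucc_iff i x).1 hx <;>
      obtain rfl | rfl := (h.eq_castSucc_iff i y).1 hy
    exacts [.inl rfl, .inr (h.isTwin i), .inr (h.isTwin i).symm, .inl rfl]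
  · exact .inl (((h.eq_last_iff x).1 hx).trans ((h.eq_last_iff y).1 hy).symm)

theorem not_controllable (h : IsTwinPartition G u v a c) {r : Fin (t + 1) → Fin m}
    (hr : ¬ r.Injective) (hlast : ∀ j, r j = r (Fin.last t) → j = Fin.last t)
    (hρ : IsQuotAEP (quotLap G c) r) {b : Fin n → ℝ} (hb : ∀ i, b i = 0 ∨ b i = 1) :
    ¬ Controllable (lap G) b := by
  by_cases hpair : ∃ i, b (u i) = b (v i)
  · obtain ⟨i, hi⟩ := hpair
    exact (h.isTwin i).not_controllable hi
  push Not at hpair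
  have average_pair (i : Fin t) : (cellAverage c *ᵥ b) i.castSucc = 1 / 2 := by
    have sum_pair : b (u i) + b (v i) = 1 := by grind
    rw [cellAverage_mulVec_apply_of_pair h.surjective (h.isTwin i).1 (h.eq_castSucc_iff i),
      sum_pair]
  refine h.isAEP.not_controllable h.surjective hr hρ fun j j' hjj' => ?_
  induction j using Fin.lastCases with
  | last => rw [hlast j' hjj'.symm]
  | cast i =>
    induction j' using Fin.lastCases with
    | last => rw [hlast _ hjj']
    | cast i' => rw [average_pair, average_pair]

end IsTwinPartition

theorem stmt5 {t n : ℕ} (hn : n = 2 * t + 1)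
    (G : SimpleGraph (Fin n)) (hconn : G.Connected)
    (hspec : HasSimpleSpectrum (lap G))
    (u v : Fin t → Fin n) (a : Fin n)
    (htwin : ∀ i, IsTwin G (u i) (v i))
    (hna : ∀ w, ¬ IsTwin G a w)
    (c : Fin n → Fin (t + 1))
    (hc : ∀ (i : Fin t) (x : Fin n), c x = Fin.castLE (by omega) i ↔ (x = u i ∨ x = v i))
    (hca : ∀ x, c x = ⟨t, by omega⟩ ↔ x = a)
    {m : ℕ} (hm : m < t) (r : Fin (t + 1) → Fin (m + 1))
    (hrsurj : Function.Surjective r)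
    (hrlast : ∀ j : Fin (t + 1), r j = Fin.last m ↔ (j : ℕ) = t)
    (hρ : IsQuotAEP (quotLap G c) r) :
    StronglyUncontrollable G := by
  have hπ : IsTwinPartition G u v a c := ⟨htwin, hc, hca⟩
  have hr : ¬ r.Injective := fun hinj => by
    have card_le : t + 1 ≤ m + 1 := by simpa using Fintype.card_le_of_injective r hinj
    omega
  have hlast (j : Fin (t + 1)) (hj : r j = r (Fin.last t)) : j = Fin.last t :=
    Fin.ext ((hrlast j).1 (hj.trans ((hrlast _).2 rfl)))
  exact ⟨hconn, hspec, fun b hb => hπ.not_controllable hr hlast hρ hb⟩
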